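/- Let X be a Banach space. The set PAP₀(ℝ,X) of bounded continuous functions φ : ℝ → X with lim_{L→∞} (1/(2L)) ∫_{-L}^L ‖φ(t)‖ dt = 0 is a closed linear subspace of the Banach space of bounded continuous functions BC(ℝ,X) with the supremum norm. -/

import Mathlib

open Filter

/-- A bounded continuous function has vanishing Cesàro mean of its norm. -/
def IsPAP0 {X : Type*} [NormedAddCommGroup X]
    (φ : BoundedContinuousFunction ℝ X) : Prop :=
  Tendsto (fun L : ℝ => (1 / (2 * L)) * ∫ t in (-L)..L, ‖φ t‖) atTop (nhds 0)

open scoped BoundedContinuousFunction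

section NormMean

variable {X : Type*} [NormedAddCommGroup X]

/-- The Cesàro mean of `‖φ‖` over `[-L, L]`. -/
noncomputable def normMean (φ : ℝ →ᵇ X) (L : ℝ) : ℝ :=
  (1 / (2 * L)) * ∫ t in (-L)..L, ‖φ t‖

theorem isPAP0_iff (φ : ℝ →ᵇ X) : IsPAP0 φ ↔ Tendsto (normMean φ) atTop (nhds 0) :=
  Iff.rfl

theorem intervalIntegrable_norm (φ : ℝ →ᵇ X) (a b : ℝ) :
    IntervalIntegrable (fun t => ‖φ t‖) MeasureTheory.volume a b :=
  φ.continuous.norm.intervalIntegrable a b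

theorem normMean_nonneg (φ : ℝ →ᵇ X) {L : ℝ} (hL : 0 < L) : 0 ≤ normMean φ L :=
  mul_nonneg (by positivity)
    (intervalIntegral.integral_nonneg (by linarith) fun _ _ => norm_nonneg _)

theorem normMean_le_norm (φ : ℝ →ᵇ X) {L : ℝ} (hL : 0 < L) : normMean φ L ≤ ‖φ‖ := by
  have h : ∫ t in (-L)..L, ‖φ t‖ ≤ ∫ _ in (-L)..L, ‖φ‖ :=
    intervalIntegral.integral_mono (by linarith) (intervalIntegrable_norm φ _ _)
      intervalIntegrable_const fun t => φ.norm_coe_le_norm t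
  rw [intervalIntegral.integral_const, smul_eq_mul] at h
  rw [normMean, one_div_mul_eq_div, div_le_iff₀ (by positivity)]
  linarith

theorem normMean_add_le (φ ψ : ℝ →ᵇ X) {L : ℝ} (hL : 0 < L) :
    normMean (φ + ψ) L ≤ normMean φ L + normMean ψ L := by
  rw [normMean, normMean, normMean, ← mul_add, ← intervalIntegral.integral_add
    (intervalIntegrable_norm φ _ _) (intervalIntegrable_norm ψ _ _)]
  gcongr
  exact intervalIntegral.integral_mono (by linarith) (intervalIntegrable_norm (φ + ψ) _ _)
    ((intervalIntegrable_norm φ _ _).add (intervalIntegrable_norm ψ _ _))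
    fun t => norm_add_le (φ t) (ψ t)

theorem normMean_smul [NormedSpace ℝ X] (c : ℝ) (φ : ℝ →ᵇ X) (L : ℝ) :
    normMean (c • φ) L = |c| * normMean φ L := by
  simp only [normMean, BoundedContinuousFunction.coe_smul, norm_smul, Real.norm_eq_abs,
    intervalIntegral.integral_const_mul]
  ring

theorem IsPAP0.zero : IsPAP0 (0 : ℝ →ᵇ X) := by
  simp [IsPAP0]

theorem IsPAP0.add {φ ψ : ℝ →ᵇ X} (hφ : IsPAP0 φ) (hψ : IsPAP0 ψ) : IsPAP0 (φ + ψ) := by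
  rw [isPAP0_iff] at *
  refine squeeze_zero' ?_ ?_ (by simpa using hφ.add hψ)
  · filter_upwards [eventually_gt_atTop 0] with L hL using normMean_nonneg _ hL
  · filter_upwards [eventually_gt_atTop 0] with L hL using normMean_add_le _ _ hL

theorem IsPAP0.smul [NormedSpace ℝ X] (c : ℝ) {φ : ℝ →ᵇ X} (hφ : IsPAP0 φ) :
    IsPAP0 (c • φ) := by
  rw [isPAP0_iff] at *
  simpa only [funext (normMean_smul c φ), mul_zero] using hφ.const_mul |c|

theorem isClosed_setOf_isPAP0 : IsClosed {φ : ℝ →ᵇ X | IsPAP0 φ} := by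
  refine isClosed_of_closure_subset fun φ hφ => ?_
  rw [Set.mem_ofPred_eq, isPAP0_iff, Metric.tendsto_nhds]
  intro ε hε
  obtain ⟨ψ, hψ, hdist⟩ := Metric.mem_closure_iff.1 hφ (ε / 2) (half_pos hε)
  rw [dist_eq_norm] at hdist
  have hsmall : ∀ᶠ L in atTop, normMean ψ L < ε / 2 :=
    ((isPAP0_iff ψ).1 hψ).eventually_lt_const (half_pos hε)
  filter_upwards [eventually_gt_atTop 0, hsmall] with L hL hψL
  have hadd := normMean_add_le (φ - ψ) ψ hL
  rw [sub_add_cancel] at hadd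
  rw [Real.dist_0_eq_abs, abs_of_nonneg (normMean_nonneg φ hL)]
  linarith [normMean_le_norm (φ - ψ) hL]

end NormMean

/-- `PAP₀(ℝ,X)` is a closed linear subspace of `BC(ℝ,X)`. -/
theorem stmt6 {X : Type*} [NormedAddCommGroup X] [NormedSpace ℝ X] :
    IsClosed {φ : BoundedContinuousFunction ℝ X | IsPAP0 φ} ∧
      IsPAP0 (0 : BoundedContinuousFunction ℝ X) ∧
      (∀ φ ψ : BoundedContinuousFunction ℝ X, IsPAP0 φ → IsPAP0 ψ → IsPAP0 (φ + ψ)) ∧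
      (∀ (c : ℝ) (φ : BoundedContinuousFunction ℝ X), IsPAP0 φ → IsPAP0 (c • φ)) :=
  ⟨isClosed_setOf_isPAP0, IsPAP0.zero, fun _ _ => IsPAP0.add, fun c _ => IsPAP0.smul c⟩
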